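/- arXiv:1807.02661 — 3 statements merged into one kernel-verified Lean document; each statement's English description precedes it below -/
import Mathlib

section
/- Suppose L = lim_{V→∞} f'(V) is finite and f(2V) − 2f(V) → ∞ as V → ∞ (i.e. M = ∞). Then for each fixed V₁ > 0, μ(V₁, V₂) → −∞ as V₂ → ∞. -/
open Filter Set

/-- The perimeter difference μ(V₁,V₂) between the triple interval and the double
interval, expressed via the equilibrium point Ṽ = Vt V₁ V₂. -/
noncomputable def mu (f : ℝ → ℝ) (Vt : ℝ → ℝ → ℝ) (V₁ V₂ : ℝ) : ℝ :=
  2 * f (V₁ / 2) + 2 * f ((V₁ + V₂) / 2)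
    - f (Vt V₁ V₂) - f (Vt V₁ V₂ + V₁) - f (Vt V₁ V₂ + V₁ + V₂)

/-!
Write `V = V₁ + V₂` and let `x` be the equilibrium point. Midpoint convexity gives
`2 f (V / 2) ≤ f (-x) + f (x + V)`, so `μ ≤ 2 f (V₁ / 2) - f (x + V₁)`, which is very negative as
soon as `x ≤ -T` for a large `T`. If instead `-T ≤ x`, the equilibrium equation bounds
`f' (x + V)`, hence `f' (V / 2)`, by `2 f' T`, so replacing `V / 2` by `(V - T) / 2` changes `f` by
a bounded amount only, and `μ` is at most a constant minus `f (V - T) - 2 f ((V - T) / 2)`.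
-/

section EvenConvex

variable {𝕜 β : Type*} [Field 𝕜] [LinearOrder 𝕜] [IsStrictOrderedRing 𝕜]
  [AddCommGroup β] [LinearOrder β] [IsOrderedAddMonoid β] [Module 𝕜 β] [IsStrictOrderedModule 𝕜 β]
  {f : 𝕜 → β}

theorem apply_le_apply_of_even_of_convexOn (he : Function.Even f) (hc : ConvexOn 𝕜 univ f)
    {x y : 𝕜} (hxy : |x| ≤ |y|) : f x ≤ f y := by
  have hle : f x ≤ max (f (-|y|)) (f |y|) :=
    hc.le_max_of_mem_Icc (mem_univ _) (mem_univ _) (abs_le.mp hxy)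
  have habs : f |y| = f y := by
    rcases abs_choice y with h | h <;> simp only [h, he y]
  rwa [he, max_self, habs] at hle

theorem apply_zero_le_of_even_of_convexOn (he : Function.Even f) (hc : ConvexOn 𝕜 univ f)
    (x : 𝕜) : f 0 ≤ f x :=
  apply_le_apply_of_even_of_convexOn he hc (abs_zero.trans_le (abs_nonneg x))

end EvenConvex

theorem two_mul_apply_half_add_le_of_convexOn {𝕜 : Type*} [Field 𝕜] [LinearOrder 𝕜]
    [IsStrictOrderedRing 𝕜] {s : Set 𝕜} {f : 𝕜 → 𝕜} (hc : ConvexOn 𝕜 s f) {a b : 𝕜}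
    (ha : a ∈ s) (hb : b ∈ s) : 2 * f ((a + b) / 2) ≤ f a + f b := by
  have h := hc.2 ha hb (by positivity : (0 : 𝕜) ≤ 1 / 2) (by positivity) (add_halves 1)
  simp only [smul_eq_mul, one_div_mul_eq_div, ← add_div] at h
  linarith

theorem apply_sub_apply_le_deriv_mul_sub_of_convexOn {s : Set ℝ} {f : ℝ → ℝ}
    (hc : ConvexOn ℝ s f) {x y : ℝ} (hx : x ∈ s) (hy : y ∈ s) (hxy : x ≤ y)
    (hd : DifferentiableAt ℝ f y) : f y - f x ≤ deriv f y * (y - x) := by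
  rcases hxy.eq_or_lt with rfl | hlt
  · simp
  · have h := hc.slope_le_deriv hx hy hlt hd
    rwa [slope_def_field, div_le_iff₀ (sub_pos.mpr hlt)] at h

theorem odd_deriv_of_even {𝕜 F : Type*} [NontriviallyNormedField 𝕜] [NormedAddCommGroup F]
    [NormedSpace 𝕜 F] {f : 𝕜 → F} (he : Function.Even f) : Function.Odd (deriv f) := fun x ↦ by
  rw [← neg_eq_iff_eq_neg, ← deriv_comp_neg, funext he]

theorem apply_le_two_mul_apply_of_add_add_eq_zero {α β : Type*} [Neg α] [Preorder α]
    [CommRing β] [LinearOrder β] [IsStrictOrderedRing β] {g : α → β} (ho : Function.Odd g)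
    (hm : Monotone g) {a b c T : α} (ha : -T ≤ a) (hb : -T ≤ b) (h : g a + g b + g c = 0) :
    g c ≤ 2 * g T := by
  have hga : -g T ≤ g a := ho T ▸ hm ha
  have hgb : -g T ≤ g b := ho T ▸ hm hb
  linarith

section Doubling

variable {f : ℝ → ℝ}

theorem tendsto_apply_sub_two_mul_apply_half
    (hM : Tendsto (fun V ↦ f (2 * V) - 2 * f V) atTop atTop) :
    Tendsto (fun V ↦ f V - 2 * f (V / 2)) atTop atTop := by
  have h := hM.comp (tendsto_id.atTop_div_const (two_pos : (0 : ℝ) < 2))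
  simpa only [Function.comp_def, id, mul_div_cancel₀ _ (two_ne_zero' ℝ)] using h

theorem tendsto_atTop_of_tendsto_apply_two_mul_sub {m : ℝ} (hm : ∀ x, m ≤ f x)
    (hM : Tendsto (fun V ↦ f (2 * V) - 2 * f V) atTop atTop) : Tendsto f atTop atTop := by
  refine tendsto_atTop_mono (fun V ↦ ?_) (tendsto_atTop_add_const_right _ (2 * m)
    (tendsto_apply_sub_two_mul_apply_half hM))
  linarith [hm (V / 2)]

end Doubling

section PerimeterDifference

variable {f : ℝ → ℝ} {Vt : ℝ → ℝ → ℝ} {V₁ V₂ T : ℝ}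

theorem mu_le_sub_apply_middle (he : Function.Even f) (hc : ConvexOn ℝ univ f) :
    mu f Vt V₁ V₂ ≤ 2 * f (V₁ / 2) - f (Vt V₁ V₂ + V₁) := by
  have h := two_mul_apply_half_add_le_of_convexOn hc (mem_univ (-Vt V₁ V₂))
    (mem_univ (Vt V₁ V₂ + V₁ + V₂))
  rw [he, show -Vt V₁ V₂ + (Vt V₁ V₂ + V₁ + V₂) = V₁ + V₂ by ring] at h
  unfold mu
  linarith

theorem deriv_half_le_of_equilibrium (he : Function.Even f) (hc : ConvexOn ℝ univ f)
    (hd : Differentiable ℝ f) (hV₁ : 0 ≤ V₁) (hTV : 2 * T ≤ V₁ + V₂) {x : ℝ} (hx : -T ≤ x)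
    (heq : deriv f x + deriv f (x + V₁) + deriv f (x + V₁ + V₂) = 0) :
    deriv f ((V₁ + V₂) / 2) ≤ 2 * deriv f T := by
  have hm : Monotone (deriv f) := monotoneOn_univ.mp (hc.monotoneOn_deriv fun y _ ↦ hd y)
  calc deriv f ((V₁ + V₂) / 2) ≤ deriv f (x + V₁ + V₂) := hm (by linarith)
    _ ≤ 2 * deriv f T :=
      apply_le_two_mul_apply_of_add_add_eq_zero (odd_deriv_of_even he) hm hx (by linarith) heq

theorem mu_le_of_neg_le_of_deriv_half_le (he : Function.Even f) (hc : ConvexOn ℝ univ f)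
    (hd : DifferentiableAt ℝ f ((V₁ + V₂) / 2)) (hT : 0 ≤ T) (hTV : T ≤ V₁ + V₂)
    (hx : -T ≤ Vt V₁ V₂) {C : ℝ} (hC : deriv f ((V₁ + V₂) / 2) ≤ C) :
    mu f Vt V₁ V₂ ≤ 2 * f (V₁ / 2) - 2 * f 0 + C * T
      - (f (V₁ + V₂ - T) - 2 * f ((V₁ + V₂ - T) / 2)) := by
  have hshift : f ((V₁ + V₂) / 2) - f ((V₁ + V₂ - T) / 2) ≤ C * (T / 2) := calc
    _ ≤ deriv f ((V₁ + V₂) / 2) * ((V₁ + V₂) / 2 - (V₁ + V₂ - T) / 2) :=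
      apply_sub_apply_le_deriv_mul_sub_of_convexOn hc (mem_univ _) (mem_univ _) (by linarith) hd
    _ = deriv f ((V₁ + V₂) / 2) * (T / 2) := by ring
    _ ≤ C * (T / 2) := by gcongr
  have hright : f (V₁ + V₂ - T) ≤ f (Vt V₁ V₂ + V₁ + V₂) :=
    apply_le_apply_of_even_of_convexOn he hc (abs_le_abs_of_nonneg (by linarith) (by linarith))
  have hleft := apply_zero_le_of_even_of_convexOn he hc (Vt V₁ V₂)
  have hmiddle := apply_zero_le_of_even_of_convexOn he hc (Vt V₁ V₂ + V₁)
  unfold mu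
  linarith

theorem mu_le_max_of_equilibrium (he : Function.Even f) (hc : ConvexOn ℝ univ f)
    (hd : Differentiable ℝ f) (hV₁ : 0 ≤ V₁) {R : ℝ} (hR : 0 ≤ R) (hRV : 2 * (R + V₁) ≤ V₁ + V₂)
    (heq : deriv f (Vt V₁ V₂) + deriv f (Vt V₁ V₂ + V₁) + deriv f (Vt V₁ V₂ + V₁ + V₂) = 0) :
    mu f Vt V₁ V₂ ≤ max (2 * f (V₁ / 2) - f R)
      (2 * f (V₁ / 2) - 2 * f 0 + 2 * deriv f (R + V₁) * (R + V₁)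
        - (f (V₂ - R) - 2 * f ((V₂ - R) / 2))) := by
  rcases le_total (Vt V₁ V₂) (-(R + V₁)) with hfar | hnear
  · have habs : |R| ≤ |Vt V₁ V₂ + V₁| := by
      rw [abs_of_nonneg hR]
      exact le_abs.mpr (Or.inr (by linarith))
    have hmiddle := apply_le_apply_of_even_of_convexOn he hc habs
    exact le_max_of_le_left ((mu_le_sub_apply_middle he hc).trans (by linarith))
  · have hslope := deriv_half_le_of_equilibrium he hc hd hV₁ hRV hnear heq
    have hmu := mu_le_of_neg_le_of_deriv_half_le he hc (hd _) (by linarith) (by linarith) hnear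
      hslope
    rw [show V₁ + V₂ - (R + V₁) = V₂ - R by ring] at hmu
    exact le_max_of_le_right hmu

end PerimeterDifference

theorem stmt_8_general (f : ℝ → ℝ)
    (hf_even : ∀ x, f (-x) = f x)
    (hf_conv : ConvexOn ℝ Set.univ f)
    (hf_diff : Differentiable ℝ f)
    (hM : Tendsto (fun V : ℝ => f (2 * V) - 2 * f V) atTop atTop)
    (Vt : ℝ → ℝ → ℝ)
    (hVt : ∀ V₁ V₂ : ℝ, 0 < V₁ → 0 < V₂ →
      deriv f (Vt V₁ V₂) + deriv f (Vt V₁ V₂ + V₁) + deriv f (Vt V₁ V₂ + V₁ + V₂) = 0) :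
    ∀ V₁ : ℝ, 0 < V₁ →
      Tendsto (fun V₂ => mu f Vt V₁ V₂) atTop atBot := by
  refine fun V₁ hV₁ ↦ tendsto_atBot.mpr fun b ↦ ?_
  have hf_top : Tendsto f atTop atTop := tendsto_atTop_of_tendsto_apply_two_mul_sub
    (apply_zero_le_of_even_of_convexOn hf_even hf_conv) hM
  obtain ⟨R, hR, hfR⟩ : ∃ R, 0 ≤ R ∧ 2 * f (V₁ / 2) - b ≤ f R :=
    ((eventually_ge_atTop 0).and (hf_top.eventually_ge_atTop _)).exists
  have hdoubling : Tendsto (fun V₂ ↦ f (V₂ - R) - 2 * f ((V₂ - R) / 2)) atTop atTop :=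
    (tendsto_apply_sub_two_mul_apply_half hM).comp (tendsto_atTop_add_const_right _ (-R) tendsto_id)
  filter_upwards [eventually_gt_atTop 0, eventually_ge_atTop (2 * (R + V₁) - V₁),
    hdoubling.eventually_ge_atTop
      (2 * f (V₁ / 2) - 2 * f 0 + 2 * deriv f (R + V₁) * (R + V₁) - b)] with V₂ hV₂ hRV hlarge
  exact (mu_le_max_of_equilibrium hf_even hf_conv hf_diff hV₁.le hR (by linarith)
    (hVt V₁ V₂ hV₁ hV₂)).trans (max_le (by linarith) (by linarith))

/-- Suppose L = lim_{V→∞} f'(V) is finite and f(2V) − 2f(V) → ∞ as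
V → ∞ (i.e. M = ∞). Then for each fixed V₁ > 0, μ(V₁, V₂) → −∞ as V₂ → ∞. -/
theorem stmt_8 (f : ℝ → ℝ)
    (hf_even : ∀ x, f (-x) = f x)
    (hf_conv : StrictConvexOn ℝ Set.univ f)
    (hf_smooth : ContDiff ℝ 1 f)
    (hf_pos : ∀ x, 0 < f x)
    (L : ℝ) (hL : Tendsto (deriv f) atTop (nhds L))
    (hM : Tendsto (fun V : ℝ => f (2 * V) - 2 * f V) atTop atTop)
    (Vt : ℝ → ℝ → ℝ)
    (hVt : ∀ V₁ V₂ : ℝ, 0 < V₁ → 0 < V₂ →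
      deriv f (Vt V₁ V₂) + deriv f (Vt V₁ V₂ + V₁) + deriv f (Vt V₁ V₂ + V₁ + V₂) = 0) :
    ∀ V₁ : ℝ, 0 < V₁ →
      Tendsto (fun V₂ => mu f Vt V₁ V₂) atTop atBot :=
  stmt_8_general f hf_even hf_conv.convexOn (hf_smooth.differentiable one_ne_zero) hM Vt hVt
end

section
/- If V₁ > 0 and V₁ ≥ V₀ (in particular V₀ is finite), then μ(V₁, V₂) > 0 for every V₂ ≥ V₁; that is, at and beyond the blowup time the double interval strictly beats the triple interval for all larger prescribed volumes. -/
open Filter Set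

/-! For fixed volumes the triple perimeter is convex in the position of the triple interval, so the
equilibrium minimizes it. Its tangent plane at the equilibrium therefore supports the minimal
perimeter from below, while the perimeter at a fixed position bounds it from above; both have the
same derivative, so the minimal perimeter is differentiable in the volumes (an envelope theorem).
Hence `μ` is continuous, and `∂μ/∂V₂ = f'((V₁ + V₂) / 2) - f'(Ṽ + V₁ + V₂) < 0` for `V₂ > V₁`. If
`V₁ ≥ V₀`, then continuity gives `μ(V₁, V₂) ≥ 0` for all `V₂ ≥ V₁`, since a negative value would
persist at `(V₁ + ε, V₂ + ε)`; strict monotonicity in `V₂` upgrades this to `μ(V₁, V₂) > 0`. -/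

open Asymptotics Topology

theorem hasFDerivAt_of_tangent_le_of_le {E : Type*} [NormedAddCommGroup E] [NormedSpace ℝ E]
    {φ ψ : E → ℝ} {φ' : E →L[ℝ] ℝ} {x : E} (hψ : HasFDerivAt ψ φ' x) (hx : ψ x = φ x)
    (hlower : ∀ᶠ y in 𝓝 x, φ x + φ' (y - x) ≤ φ y) (hupper : ∀ᶠ y in 𝓝 x, φ y ≤ ψ y) :
    HasFDerivAt φ φ' x := by
  refine .of_isLittleO <| IsBigO.trans_isLittleO (IsBigO.of_norm_eventuallyLE ?_) hψ.isLittleO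
  filter_upwards [hlower, hupper] with y hly huy
  rw [Real.norm_of_nonneg (by linarith), hx]
  exact sub_le_sub_right (sub_le_sub_right huy _) _

theorem add_deriv_mul_sub_le_of_convexOn {s : Set ℝ} {f : ℝ → ℝ} {x y : ℝ}
    (hf : ConvexOn ℝ s f) (hd : DifferentiableAt ℝ f x) (hx : x ∈ s) (hy : y ∈ s) :
    f x + deriv f x * (y - x) ≤ f y := by
  rcases lt_trichotomy x y with hxy | rfl | hyx
  · have hslope := hf.deriv_le_slope hx hy hxy hd
    rw [slope_def_field, le_div_iff₀ (sub_pos.2 hxy)] at hslope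
    linarith
  · simp
  · have hslope := hf.slope_le_deriv hy hx hyx hd
    rw [slope_def_field, div_le_iff₀ (sub_pos.2 hyx)] at hslope
    linarith

theorem odd_deriv_of_even_s12 {f : ℝ → ℝ} (hf : Function.Even f) : Function.Odd (deriv f) := by
  intro x
  rw [← neg_eq_iff_eq_neg, ← deriv_comp_neg, funext hf]

/-- The perimeter of the triple interval whose endpoints, in volume coordinates, are `u`, `u + V₁`
and `u + V₁ + V₂`, as a function of its position `u` and of the enclosed volumes. -/
def triplePerimeter (f : ℝ → ℝ) (u V₁ V₂ : ℝ) : ℝ :=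
  f u + f (u + V₁) + f (u + V₁ + V₂)

/-- The first-order condition saying that the triple interval at position `u` is stationary for
`triplePerimeter` under translations. -/
def IsTripleEquilibrium (f : ℝ → ℝ) (u V₁ V₂ : ℝ) : Prop :=
  deriv f u + deriv f (u + V₁) + deriv f (u + V₁ + V₂) = 0

section TripleInterval

variable {f : ℝ → ℝ} {u V₁ V₂ : ℝ}

theorem IsTripleEquilibrium.midpoint_lt_right (hu : IsTripleEquilibrium f u V₁ V₂)
    (hodd : Function.Odd (deriv f)) (hmono : StrictMono (deriv f)) (hV : V₁ < V₂) :
    (V₁ + V₂) / 2 < u + V₁ + V₂ := by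
  by_contra! hright
  have hleft : deriv f u ≤ -deriv f ((V₁ + V₂) / 2) := by
    rw [← hodd]
    exact hmono.monotone (by linarith)
  have hmiddle : deriv f (u + V₁) < 0 := by
    rw [← hodd.map_zero]
    exact hmono (by linarith)
  have hsum : deriv f u + deriv f (u + V₁) + deriv f (u + V₁ + V₂) = 0 := hu
  linarith [hmono.monotone hright]

theorem IsTripleEquilibrium.tangent_le_triplePerimeter (hu : IsTripleEquilibrium f u V₁ V₂)
    (hconv : ConvexOn ℝ univ f) (hd : Differentiable ℝ f) (v W₁ W₂ : ℝ) :
    triplePerimeter f u V₁ V₂ + ((deriv f (u + V₁) + deriv f (u + V₁ + V₂)) * (W₁ - V₁)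
      + deriv f (u + V₁ + V₂) * (W₂ - V₂)) ≤ triplePerimeter f v W₁ W₂ := by
  have htangent (x y : ℝ) : f x + deriv f x * (y - x) ≤ f y :=
    add_deriv_mul_sub_le_of_convexOn hconv (hd x) (mem_univ x) (mem_univ y)
  have hsum : deriv f u + deriv f (u + V₁) + deriv f (u + V₁ + V₂) = 0 := hu
  calc triplePerimeter f u V₁ V₂ + ((deriv f (u + V₁) + deriv f (u + V₁ + V₂)) * (W₁ - V₁)
        + deriv f (u + V₁ + V₂) * (W₂ - V₂))
      = (f u + deriv f u * (v - u))
        + (f (u + V₁) + deriv f (u + V₁) * (v + W₁ - (u + V₁)))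
        + (f (u + V₁ + V₂) + deriv f (u + V₁ + V₂) * (v + W₁ + W₂ - (u + V₁ + V₂))) := by
        unfold triplePerimeter
        linear_combination (u - v) * hsum
    _ ≤ triplePerimeter f v W₁ W₂ :=
        add_le_add (add_le_add (htangent _ _) (htangent _ _)) (htangent _ _)

theorem IsTripleEquilibrium.triplePerimeter_le (hu : IsTripleEquilibrium f u V₁ V₂)
    (hconv : ConvexOn ℝ univ f) (hd : Differentiable ℝ f) (v : ℝ) :
    triplePerimeter f u V₁ V₂ ≤ triplePerimeter f v V₁ V₂ := by
  simpa using hu.tangent_le_triplePerimeter hconv hd v V₁ V₂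

theorem hasFDerivAt_triplePerimeter (hd : Differentiable ℝ f) (u : ℝ) (p : ℝ × ℝ) :
    HasFDerivAt (fun p : ℝ × ℝ => triplePerimeter f u p.1 p.2)
      ((deriv f (u + p.1) + deriv f (u + p.1 + p.2)) • ContinuousLinearMap.fst ℝ ℝ ℝ
        + deriv f (u + p.1 + p.2) • ContinuousLinearMap.snd ℝ ℝ ℝ) p := by
  have hmiddle : HasFDerivAt (fun p : ℝ × ℝ => u + p.1) (ContinuousLinearMap.fst ℝ ℝ ℝ) p :=
    hasFDerivAt_fst.const_add u
  have hright := hmiddle.add (hasFDerivAt_snd (𝕜 := ℝ) (p := p))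
  refine HasFDerivAt.congr_fderiv ((((hd _).hasDerivAt.comp_hasFDerivAt p hmiddle).const_add
    (f u)).add ((hd _).hasDerivAt.comp_hasFDerivAt p hright)) ?_
  module

end TripleInterval

section PerimeterDifference

variable {f : ℝ → ℝ} {Vt : ℝ → ℝ → ℝ} {V₁ V₂ : ℝ}

theorem mu_eq_sub_triplePerimeter (f : ℝ → ℝ) (Vt : ℝ → ℝ → ℝ) (V₁ V₂ : ℝ) :
    mu f Vt V₁ V₂ =
      2 * f (V₁ / 2) + 2 * f ((V₁ + V₂) / 2) - triplePerimeter f (Vt V₁ V₂) V₁ V₂ := by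
  unfold mu triplePerimeter
  ring

/-- Envelope theorem: the dependence of the equilibrium on the volumes does not contribute. -/
theorem hasFDerivAt_triplePerimeter_equilibrium
    (hconv : ConvexOn ℝ univ f) (hd : Differentiable ℝ f)
    (hVt : ∀ V₁ V₂ : ℝ, 0 < V₁ → 0 < V₂ → IsTripleEquilibrium f (Vt V₁ V₂) V₁ V₂)
    (hV₁ : 0 < V₁) (hV₂ : 0 < V₂) :
    HasFDerivAt (fun p : ℝ × ℝ => triplePerimeter f (Vt p.1 p.2) p.1 p.2)
      ((deriv f (Vt V₁ V₂ + V₁) + deriv f (Vt V₁ V₂ + V₁ + V₂)) • ContinuousLinearMap.fst ℝ ℝ ℝ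
        + deriv f (Vt V₁ V₂ + V₁ + V₂) • ContinuousLinearMap.snd ℝ ℝ ℝ) (V₁, V₂) := by
  refine hasFDerivAt_of_tangent_le_of_le (hasFDerivAt_triplePerimeter hd (Vt V₁ V₂) (V₁, V₂)) rfl
    ?_ ?_
  · refine .of_forall fun p => ?_
    exact (hVt V₁ V₂ hV₁ hV₂).tangent_le_triplePerimeter hconv hd (Vt p.1 p.2) p.1 p.2
  · filter_upwards [(isOpen_Ioi.prod isOpen_Ioi).mem_nhds (mk_mem_prod hV₁ hV₂)] with p hp
    exact (hVt p.1 p.2 hp.1 hp.2).triplePerimeter_le hconv hd (Vt V₁ V₂)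

theorem continuousAt_mu
    (hconv : ConvexOn ℝ univ f) (hd : Differentiable ℝ f)
    (hVt : ∀ V₁ V₂ : ℝ, 0 < V₁ → 0 < V₂ → IsTripleEquilibrium f (Vt V₁ V₂) V₁ V₂)
    (hV₁ : 0 < V₁) (hV₂ : 0 < V₂) :
    ContinuousAt (fun p : ℝ × ℝ => mu f Vt p.1 p.2) (V₁, V₂) := by
  simp only [mu_eq_sub_triplePerimeter]
  have hf : Continuous f := hd.continuous
  exact ContinuousAt.sub (by fun_prop)
    (hasFDerivAt_triplePerimeter_equilibrium hconv hd hVt hV₁ hV₂).continuousAt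

theorem hasDerivAt_mu_right
    (hconv : ConvexOn ℝ univ f) (hd : Differentiable ℝ f)
    (hVt : ∀ V₁ V₂ : ℝ, 0 < V₁ → 0 < V₂ → IsTripleEquilibrium f (Vt V₁ V₂) V₁ V₂)
    (hV₁ : 0 < V₁) (hV₂ : 0 < V₂) :
    HasDerivAt (mu f Vt V₁)
      (deriv f ((V₁ + V₂) / 2) - deriv f (Vt V₁ V₂ + V₁ + V₂)) V₂ := by
  rw [funext (mu_eq_sub_triplePerimeter f Vt V₁)]
  have hdouble : HasDerivAt (fun V => 2 * f (V₁ / 2) + 2 * f ((V₁ + V) / 2))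
      (deriv f ((V₁ + V₂) / 2)) V₂ := by
    have hhalf : HasDerivAt (fun V => (V₁ + V) / 2) (1 / 2) V₂ :=
      ((hasDerivAt_id V₂).const_add V₁).div_const 2
    refine ((((hd _).hasDerivAt.comp V₂ hhalf).const_mul 2).const_add _).congr_deriv ?_
    ring
  have htriple : HasDerivAt (fun V => triplePerimeter f (Vt V₁ V) V₁ V)
      (deriv f (Vt V₁ V₂ + V₁ + V₂)) V₂ := by
    have hpath : HasDerivAt (fun V => (V₁, V)) ((0 : ℝ), (1 : ℝ)) V₂ :=
      (hasDerivAt_const V₂ V₁).prodMk (hasDerivAt_id V₂)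
    refine ((hasFDerivAt_triplePerimeter_equilibrium hconv hd hVt hV₁ hV₂).comp_hasDerivAt
      V₂ hpath).congr_deriv ?_
    simp
  exact hdouble.sub htriple

theorem mu_nonneg_of_mem_upperBounds
    (hconv : ConvexOn ℝ univ f) (hd : Differentiable ℝ f)
    (hVt : ∀ V₁ V₂ : ℝ, 0 < V₁ → 0 < V₂ → IsTripleEquilibrium f (Vt V₁ V₂) V₁ V₂)
    (hV₁ : 0 < V₁)
    (hub : V₁ ∈ upperBounds {W : ℝ | 0 < W ∧ ∃ V₂ : ℝ, W ≤ V₂ ∧ mu f Vt W V₂ < 0})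
    (hV : V₁ ≤ V₂) : 0 ≤ mu f Vt V₁ V₂ := by
  by_contra! hneg
  have hdiag : Tendsto (fun ε : ℝ => (V₁ + ε, V₂ + ε)) (𝓝 0) (𝓝 (V₁, V₂)) :=
    Continuous.tendsto' (by fun_prop) _ _ (by simp)
  have hev : ∀ᶠ ε in 𝓝 0, mu f Vt (V₁ + ε) (V₂ + ε) < 0 :=
    hdiag.eventually <|
      (continuousAt_mu hconv hd hVt hV₁ (hV₁.trans_le hV)).eventually_lt_const hneg
  obtain ⟨ε, hlt, hε : 0 < ε⟩ :=
    ((hev.filter_mono nhdsWithin_le_nhds).and (self_mem_nhdsWithin (s := Ioi 0))).exists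
  have hle : V₁ + ε ≤ V₁ := hub ⟨by linarith, V₂ + ε, by linarith, hlt⟩
  linarith

theorem strictAntiOn_mu (heven : Function.Even f)
    (hconv : StrictConvexOn ℝ univ f) (hd : Differentiable ℝ f)
    (hVt : ∀ V₁ V₂ : ℝ, 0 < V₁ → 0 < V₂ → IsTripleEquilibrium f (Vt V₁ V₂) V₁ V₂)
    (hV₁ : 0 < V₁) : StrictAntiOn (mu f Vt V₁) (Ici V₁) := by
  have hderiv (V : ℝ) (hV : V₁ ≤ V) :=
    hasDerivAt_mu_right hconv.convexOn hd hVt hV₁ (hV₁.trans_le hV)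
  refine strictAntiOn_of_deriv_neg (convex_Ici V₁)
    (fun V hV => (hderiv V hV).continuousAt.continuousWithinAt) fun V hV => ?_
  rw [interior_Ici] at hV
  have hmono : StrictMono (deriv f) :=
    strictMonoOn_univ.1 (hconv.strictMonoOn_deriv fun x _ => hd x)
  have hright := (hVt V₁ V hV₁ (hV₁.trans hV)).midpoint_lt_right (odd_deriv_of_even_s12 heven) hmono hV
  rw [(hderiv V (le_of_lt hV)).deriv]
  exact sub_neg.2 (hmono hright)

end PerimeterDifference

theorem stmt_12_general (f : ℝ → ℝ)
    (hf_even : ∀ x, f (-x) = f x)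
    (hf_conv : StrictConvexOn ℝ Set.univ f)
    (hf_diff : Differentiable ℝ f)
    (Vt : ℝ → ℝ → ℝ)
    (hVt : ∀ V₁ V₂ : ℝ, 0 < V₁ → 0 < V₂ →
      deriv f (Vt V₁ V₂) + deriv f (Vt V₁ V₂ + V₁) + deriv f (Vt V₁ V₂ + V₁ + V₂) = 0)
    (V₁ : ℝ) (hV₁ : 0 < V₁)
    (hub : V₁ ∈ upperBounds {W : ℝ | 0 < W ∧ ∃ V₂ : ℝ, W ≤ V₂ ∧ mu f Vt W V₂ < 0}) :
    ∀ V₂ : ℝ, V₁ ≤ V₂ → 0 < mu f Vt V₁ V₂ := by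
  intro V₂ hV
  have hV' : V₁ ≤ V₂ + 1 := by linarith
  calc 0 ≤ mu f Vt V₁ (V₂ + 1) :=
        mu_nonneg_of_mem_upperBounds hf_conv.convexOn hf_diff hVt hV₁ hub hV'
    _ < mu f Vt V₁ V₂ :=
        strictAntiOn_mu hf_even hf_conv hf_diff hVt hV₁ hV hV' (lt_add_one V₂)

/-- If V₁ > 0 and V₁ ≥ V₀ (in particular V₀ is finite), then
μ(V₁, V₂) > 0 for every V₂ ≥ V₁. Here V₀ = sup{W > 0 : ∃ V₂ ≥ W, μ(W,V₂) < 0}, so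
"V₁ ≥ V₀" is expressed by saying V₁ is an upper bound of that set. -/
theorem stmt_12 (f : ℝ → ℝ)
    (hf_even : ∀ x, f (-x) = f x)
    (hf_conv : StrictConvexOn ℝ Set.univ f)
    (hf_smooth : ContDiff ℝ 1 f)
    (hf_pos : ∀ x, 0 < f x)
    (Vt : ℝ → ℝ → ℝ)
    (hVt : ∀ V₁ V₂ : ℝ, 0 < V₁ → 0 < V₂ →
      deriv f (Vt V₁ V₂) + deriv f (Vt V₁ V₂ + V₁) + deriv f (Vt V₁ V₂ + V₁ + V₂) = 0)
    (V₁ : ℝ) (hV₁ : 0 < V₁)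
    (hub : V₁ ∈ upperBounds {W : ℝ | 0 < W ∧ ∃ V₂ : ℝ, W ≤ V₂ ∧ mu f Vt W V₂ < 0}) :
    ∀ V₂ : ℝ, V₁ ≤ V₂ → 0 < mu f Vt V₁ V₂ :=
  stmt_12_general f hf_even hf_conv (hf_smooth.differentiable one_ne_zero) Vt hVt V₁ hV₁ hub
end

section
/- Assume V₀ > 0, and let λ : (0, V₀) → ℝ be the tie function assigning to each V₁ ∈ (0, V₀) the unique λ(V₁) > V₁ with μ(V₁, λ(V₁)) = 0. Then λ is strictly increasing, continuously differentiable, and tends to a finite positive limit as V₁ → 0⁺. -/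
open Filter Set

/-- The set S whose supremum is the blowup time V₀. -/
noncomputable def blowupSet (f : ℝ → ℝ) (Vt : ℝ → ℝ → ℝ) : Set ℝ :=
  {W : ℝ | 0 < W ∧ ∃ V₂ : ℝ, W ≤ V₂ ∧ mu f Vt W V₂ < 0}

/-- The interval (0, V₀): V₁ lies strictly below the supremum V₀ of `blowupSet` iff
V₁ is positive and fails to be an upper bound of `blowupSet` (valid whether V₀ is
finite or infinite). -/
def tieDomain (f : ℝ → ℝ) (Vt : ℝ → ℝ → ℝ) : Set ℝ :=
  {V₁ : ℝ | 0 < V₁ ∧ ∃ W ∈ blowupSet f Vt, V₁ < W}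

/-!
The number `μ(V₁, V₂)` is the maximum over `w` of
`2 f(V₁/2) + 2 f((V₁+V₂)/2) - f(w) - f(w+V₁) - f(w+V₁+V₂)`, attained at `w = Ṽ`.
Although `Ṽ` is only continuous, the envelope theorem makes `μ` continuously differentiable,
with partial derivatives computed at frozen `w`. For `V₁ < V₂`
the right endpoint `Ṽ + V₁ + V₂` exceeds `(V₁+V₂)/2`, so `μ` is strictly decreasing in `V₂`;
equivalently `Ṽ > -(V₁+V₂)/2`, so `μ` is strictly increasing in `V₁`. Hence `λ` is strictly
increasing, and it is `C¹` by the implicit function theorem. Near the origin `μ` is close to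
`f 0 > 0`, which keeps `λ` away from `0`.
-/

open Topology

section Envelope

variable {E F : Type*} [NormedAddCommGroup E] [NormedSpace ℝ E] [NormedAddCommGroup F]
  [NormedSpace ℝ F] {G : E × F → ℝ} {v : E → F} {p : E}

theorem hasStrictFDerivAt_envelope {G' : E × F →L[ℝ] ℝ} (hG : HasStrictFDerivAt G G' (p, v p))
    (hv : ContinuousAt v p) (hmax : ∀ᶠ x in 𝓝 p, IsMaxOn (fun y ↦ G (x, y)) univ (v x)) :
    HasStrictFDerivAt (fun x ↦ G (x, v x)) (G' ∘L .inl ℝ E F) p := by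
  rw [hasStrictFDerivAt_iff_isLittleO, Asymptotics.isLittleO_iff] at hG ⊢
  intro c hc
  have hfst : Tendsto Prod.fst (𝓝 (p, p)) (𝓝 p) := continuousAt_fst
  have hsnd : Tendsto Prod.snd (𝓝 (p, p)) (𝓝 p) := continuousAt_snd
  have hv₁ := hv.tendsto.comp hfst
  have hv₂ := hv.tendsto.comp hsnd
  have bound₁ := ((hfst.prodMk_nhds hv₁).prodMk_nhds (hsnd.prodMk_nhds hv₁)).eventually (hG hc)
  have bound₂ := ((hfst.prodMk_nhds hv₂).prodMk_nhds (hsnd.prodMk_nhds hv₂)).eventually (hG hc)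
  filter_upwards [bound₁, bound₂, hfst.eventually hmax, hsnd.eventually hmax]
    with ⟨x, y⟩ bound₁ bound₂ hx hy
  -- The increment of the envelope lies between the increments of `G` at frozen `v y` and `v x`.
  have hxy : G (x, v y) ≤ G (x, v x) := hx (mem_univ _)
  have hyx : G (y, v x) ≤ G (y, v y) := hy (mem_univ _)
  simp only [Function.comp_apply, Prod.mk_sub_mk, sub_self, Prod.norm_mk, norm_zero, norm_nonneg,
    sup_of_le_left, ContinuousLinearMap.comp_apply, ContinuousLinearMap.inl_apply,
    Real.norm_eq_abs, abs_le] at bound₁ bound₂ ⊢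
  constructor <;> linarith [bound₁.1, bound₁.2, bound₂.1, bound₂.2]

theorem contDiffAt_envelope (hG : ContDiffAt ℝ 1 G (p, v p)) (hv : ∀ᶠ x in 𝓝 p, ContinuousAt v x)
    (hmax : ∀ᶠ x in 𝓝 p, IsMaxOn (fun y ↦ G (x, y)) univ (v x)) :
    ContDiffAt ℝ 1 (fun x ↦ G (x, v x)) p := by
  have hgraph : ∀ {x}, ContinuousAt v x → ContinuousAt (fun x ↦ (x, v x)) x :=
    fun hx ↦ continuousAt_id.prodMk hx
  have hGv : ∀ᶠ x in 𝓝 p, ContDiffAt ℝ 1 G (x, v x) :=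
    (hgraph hv.self_of_nhds).eventually (hG.eventually (by simp))
  refine contDiffAt_one_iff.2 ⟨fun x ↦ fderiv ℝ G (x, v x) ∘L .inl ℝ E F,
    {x | ContDiffAt ℝ 1 G (x, v x) ∧ ContinuousAt v x ∧
      ∀ᶠ z in 𝓝 x, IsMaxOn (fun y ↦ G (z, y)) univ (v z)},
    hGv.and (hv.and hmax.eventually_nhds), fun x hx ↦ ?_, fun x hx ↦ ?_⟩
  · have hfderiv : ContinuousAt (fun x ↦ fderiv ℝ G (x, v x)) x :=
      ContinuousAt.comp (f := fun x ↦ (x, v x))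
        (hx.1.fderiv_right (m := 0) (by norm_num)).continuousAt (hgraph hx.2.1)
    exact (hfderiv.clm_comp continuousAt_const).continuousWithinAt
  · exact (hasStrictFDerivAt_envelope (hx.1.hasStrictFDerivAt one_ne_zero) hx.2.1
      hx.2.2).hasFDerivAt

theorem hasDerivAt_envelope_comp {γ : ℝ → E} {t d : ℝ} (hγ : DifferentiableAt ℝ γ t)
    (hG : ContDiffAt ℝ 1 G (γ t, v (γ t))) (hv : ContinuousAt v (γ t))
    (hmax : ∀ᶠ x in 𝓝 (γ t), IsMaxOn (fun y ↦ G (x, y)) univ (v x))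
    (hd : HasDerivAt (fun s ↦ G (γ s, v (γ t))) d t) :
    HasDerivAt (fun s ↦ G (γ s, v (γ s))) d t := by
  have hG' := hG.hasStrictFDerivAt one_ne_zero
  have hfrozen := hG'.hasFDerivAt.comp_hasDerivAt t
    (hγ.hasDerivAt.prodMk (hasDerivAt_const t (v (γ t))))
  rw [hd.unique hfrozen]
  exact (hasStrictFDerivAt_envelope hG' hv hmax).hasFDerivAt.comp_hasDerivAt t hγ.hasDerivAt

end Envelope

section Implicit

theorem continuousAt_of_strictMono_of_eq {X α β : Type*} [TopologicalSpace X] [LinearOrder α]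
    [TopologicalSpace α] [OrderTopology α] [LinearOrder β] [TopologicalSpace β]
    [OrderClosedTopology β] {Φ : X → α → β} {g : X → α} {c : β} {x : X}
    (hcont : ∀ a, ContinuousAt (fun y ↦ Φ y a) x) (hmono : ∀ᶠ y in 𝓝 x, StrictMono (Φ y))
    (hg : ∀ᶠ y in 𝓝 x, Φ y (g y) = c) : ContinuousAt g x := by
  refine tendsto_order.2 ⟨fun a ha ↦ ?_, fun a ha ↦ ?_⟩
  · have hlt : Φ x a < c := hg.self_of_nhds ▸ hmono.self_of_nhds ha
    filter_upwards [(hcont a).eventually_lt continuousAt_const hlt, hmono, hg] with y hy hmono hg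
    exact hmono.lt_iff_lt.1 (hg ▸ hy)
  · have hlt : c < Φ x a := hg.self_of_nhds ▸ hmono.self_of_nhds ha
    filter_upwards [continuousAt_const.eventually_lt (hcont a) hlt, hmono, hg] with y hy hmono hg
    exact hmono.lt_iff_lt.1 (hg ▸ hy)

theorem contDiffAt_of_levelSet_subset_graph {𝕜 E : Type*} [RCLike 𝕜] [NormedAddCommGroup E]
    [NormedSpace 𝕜 E] [CompleteSpace E] {n : WithTop ℕ∞} {Φ : E × 𝕜 → 𝕜} {g : E → 𝕜} {x : E}
    {d : 𝕜} (hn : n ≠ 0) (hΦ : ContDiffAt 𝕜 n Φ (x, g x))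
    (hd : HasDerivAt (fun y ↦ Φ (x, y)) d (g x)) (hd₀ : d ≠ 0)
    (hg : ∀ᶠ p in 𝓝 (x, g x), Φ p = Φ (x, g x) → g p.1 = p.2) : ContDiffAt 𝕜 n g x := by
  have hpartial : fderiv 𝕜 Φ (x, g x) (0, 1) = d :=
    ((hΦ.differentiableAt hn).hasFDerivAt.comp_hasDerivAt (g x)
      ((hasDerivAt_const (g x) x).prodMk (hasDerivAt_id (g x)))).unique hd
  have hinv : (fderiv 𝕜 Φ (x, g x) ∘L .inr 𝕜 E 𝕜).IsInvertible :=
    ⟨ContinuousLinearEquiv.unitsEquivAut 𝕜 (Units.mk0 d hd₀), by ext; simp [hpartial]⟩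
  -- The graph of the implicit function lies in the level set, hence in the graph of `g`.
  set ψ := hΦ.implicitFunction hn hinv
  have hψ : ContDiffAt 𝕜 n ψ x := hΦ.contDiffAt_implicitFunction hn hinv
  have hψx : ψ x = g x := hΦ.implicitFunction_apply_self hn hinv
  have hψ_graph : Tendsto (fun y ↦ (y, ψ y)) (𝓝 x) (𝓝 (x, g x)) :=
    hψx ▸ tendsto_id.prodMk_nhds hψ.continuousAt.tendsto
  refine hψ.congr_of_eventuallyEq ?_
  filter_upwards [hΦ.eventually_apply_implicitFunction hn hinv, hψ_graph.eventually hg]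
    with y hy hgy
  exact hgy hy

theorem strictMonoOn_of_level_eq {α β : Type*} [LinearOrder α] [Preorder β] {Φ : α → α → β} {z : α}
    {c : β} {s : Set α} {g : α → α} (hmono : ∀ b, z < b → StrictMonoOn (fun a ↦ Φ a b) (Ioo z b))
    (hanti : ∀ a, z < a → StrictAntiOn (Φ a) (Ioi a)) (hs : s ⊆ Ioi z)
    (hg : ∀ a ∈ s, a < g a ∧ Φ a (g a) = c) : StrictMonoOn g s := by
  intro a ha b hb hab
  obtain ⟨hga, hΦa⟩ := hg a ha
  obtain ⟨hgb, hΦb⟩ := hg b hb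
  by_contra! hle
  have hlt : Φ a (g b) < c := hΦb ▸ hmono (g b) ((hs hb).trans hgb) ⟨hs ha, hab.trans hgb⟩
    ⟨hs hb, hgb⟩ hab
  have hge : c ≤ Φ a (g b) := hΦa ▸ (hanti a (hs ha)).antitoneOn (hab.trans hgb) hga hle
  exact hlt.not_ge hge

end Implicit

section Odd

theorem deriv_odd_of_even {𝕜 F : Type*} [NontriviallyNormedField 𝕜] [NormedAddCommGroup F]
    [NormedSpace 𝕜 F] {f : 𝕜 → F} (hf : Function.Even f) : Function.Odd (deriv f) := by
  intro x
  have hneg := deriv_comp_neg f x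
  rw [show (fun x ↦ f (-x)) = f from funext hf] at hneg
  rw [hneg, neg_neg]

theorem neg_half_add_lt_of_odd {K : Type*} [Field K] [LinearOrder K] [IsStrictOrderedRing K]
    {g : K → K} (hmono : StrictMono g) (hodd : Function.Odd g) {a b v : K} (hab : a < b)
    (hv : g v + g (v + a) + g (v + a + b) = 0) : -((a + b) / 2) < v := by
  by_contra! hle
  have hleft : g v ≤ -g ((a + b) / 2) := hodd _ ▸ hmono.monotone hle
  have hmiddle : g (v + a) < 0 := hodd.map_zero ▸ hmono (by linarith)
  have hright : g (v + a + b) ≤ g ((a + b) / 2) := hmono.monotone (by linarith)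
  linarith

end Odd

section Perimeter

variable {f : ℝ → ℝ} {Vt : ℝ → ℝ → ℝ}

/-- The perimeter difference with the triple interval placed freely: the volumes are `q.1.1` and
`q.1.2`, and the leftmost endpoint of the triple interval is `q.2`, so that `mu` is its value at the
equilibrium point. -/
noncomputable def perimeterGap (f : ℝ → ℝ) (q : (ℝ × ℝ) × ℝ) : ℝ :=
  2 * f (q.1.1 / 2) + 2 * f ((q.1.1 + q.1.2) / 2)
    - f q.2 - f (q.2 + q.1.1) - f (q.2 + q.1.1 + q.1.2)

/-- `Vt V₁ V₂` is an equilibrium point `Ṽ` for all positive volumes; its values at other volumes are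
arbitrary. -/
def IsEquilibrium (f : ℝ → ℝ) (Vt : ℝ → ℝ → ℝ) : Prop :=
  ∀ V₁ V₂ : ℝ, 0 < V₁ → 0 < V₂ →
    deriv f (Vt V₁ V₂) + deriv f (Vt V₁ V₂ + V₁) + deriv f (Vt V₁ V₂ + V₁ + V₂) = 0

theorem contDiff_perimeterGap {n : WithTop ℕ∞} (hf : ContDiff ℝ n f) :
    ContDiff ℝ n (perimeterGap f) := by
  unfold perimeterGap
  fun_prop

theorem hasDerivAt_perimeterGap_left (hf : Differentiable ℝ f) (a b w : ℝ) :
    HasDerivAt (fun x ↦ perimeterGap f ((x, b), w))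
      (deriv f (a / 2) + deriv f ((a + b) / 2) - deriv f (w + a) - deriv f (w + a + b)) a := by
  have hid := hasDerivAt_id a
  have hhalf := ((hf (a / 2)).hasDerivAt.comp a (hid.div_const 2)).const_mul 2
  have hmean := ((hf ((a + b) / 2)).hasDerivAt.comp a ((hid.add_const b).div_const 2)).const_mul 2
  have hmiddle := (hf (w + a)).hasDerivAt.comp a (hid.const_add w)
  have hright := (hf (w + a + b)).hasDerivAt.comp a ((hid.const_add w).add_const b)
  exact ((((hhalf.add hmean).sub_const (f w)).sub hmiddle).sub hright).congr_deriv (by ring)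

theorem hasDerivAt_perimeterGap_right (hf : Differentiable ℝ f) (a b w : ℝ) :
    HasDerivAt (fun x ↦ perimeterGap f ((a, x), w))
      (deriv f ((a + b) / 2) - deriv f (w + a + b)) b := by
  have hid := hasDerivAt_id b
  have hmean := ((hf ((a + b) / 2)).hasDerivAt.comp b ((hid.const_add a).div_const 2)).const_mul 2
  have hright := (hf (w + a + b)).hasDerivAt.comp b (hid.const_add (w + a))
  exact ((((hmean.const_add (2 * f (a / 2))).sub_const (f w)).sub_const (f (w + a))).sub
    hright).congr_deriv (by ring)

theorem isMaxOn_perimeterGap (hf : Differentiable ℝ f) (hmono : Monotone (deriv f)) {p : ℝ × ℝ}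
    {w : ℝ} (hw : deriv f w + deriv f (w + p.1) + deriv f (w + p.1 + p.2) = 0) :
    IsMaxOn (fun y ↦ perimeterGap f (p, y)) univ w := by
  set triple : ℝ → ℝ := fun y ↦ f y + f (y + p.1) + f (y + p.1 + p.2)
  have hderiv (y : ℝ) :
      HasDerivAt triple (deriv f y + deriv f (y + p.1) + deriv f (y + p.1 + p.2)) y := by
    have hshift (a : ℝ) := (hf (y + a)).hasDerivAt.comp_add_const y a
    simpa only [triple, add_assoc] using
      ((hf y).hasDerivAt.fun_add (hshift p.1)).fun_add (hshift (p.1 + p.2))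
  have hconvex : ConvexOn ℝ univ triple := by
    refine Monotone.convexOn_univ_of_deriv (fun y ↦ (hderiv y).differentiableAt) fun y z hyz ↦ ?_
    rw [(hderiv y).deriv, (hderiv z).deriv]
    gcongr <;> exact hmono (by gcongr)
  have hmin : IsMinOn triple univ w := hconvex.isMinOn_of_rightDeriv_eq_zero (by simp)
    (((hderiv w).hasDerivWithinAt.derivWithin (uniqueDiffWithinAt_Ioi w)).trans hw)
  refine isMaxOn_iff.2 fun y hy ↦ ?_
  have hle : triple w ≤ triple y := hmin hy
  simp only [perimeterGap]
  linarith

namespace IsEquilibrium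

theorem continuousAt (hVt : IsEquilibrium f Vt) (hcont : Continuous (deriv f))
    (hmono : StrictMono (deriv f)) {a b : ℝ} (ha : 0 < a) (hb : 0 < b) :
    ContinuousAt (fun p : ℝ × ℝ ↦ Vt p.1 p.2) (a, b) := by
  refine continuousAt_of_strictMono_of_eq (c := 0)
    (Φ := fun p w ↦ deriv f w + deriv f (w + p.1) + deriv f (w + p.1 + p.2))
    (fun w ↦ by fun_prop) (.of_forall fun p ↦ ?_) ?_
  · exact (hmono.add (hmono.comp (strictMono_id.add_const _))).add
      (hmono.comp ((strictMono_id.add_const _).add_const _))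
  · filter_upwards [prod_mem_nhds (Ioi_mem_nhds ha) (Ioi_mem_nhds hb)] with p hp
    exact hVt _ _ hp.1 hp.2

theorem eventually_isMaxOn (hVt : IsEquilibrium f Vt) (hf : Differentiable ℝ f)
    (hmono : Monotone (deriv f)) {a b : ℝ} (ha : 0 < a) (hb : 0 < b) :
    ∀ᶠ p : ℝ × ℝ in 𝓝 (a, b), IsMaxOn (fun w ↦ perimeterGap f (p, w)) univ (Vt p.1 p.2) := by
  filter_upwards [prod_mem_nhds (Ioi_mem_nhds ha) (Ioi_mem_nhds hb)] with p hp
  exact isMaxOn_perimeterGap hf hmono (hVt _ _ hp.1 hp.2)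

theorem eventually_continuousAt (hVt : IsEquilibrium f Vt) (hcont : Continuous (deriv f))
    (hmono : StrictMono (deriv f)) {a b : ℝ} (ha : 0 < a) (hb : 0 < b) :
    ∀ᶠ p : ℝ × ℝ in 𝓝 (a, b), ContinuousAt (fun p : ℝ × ℝ ↦ Vt p.1 p.2) p := by
  filter_upwards [prod_mem_nhds (Ioi_mem_nhds ha) (Ioi_mem_nhds hb)] with p hp
  exact hVt.continuousAt hcont hmono hp.1 hp.2

theorem contDiffAt_mu (hVt : IsEquilibrium f Vt) (hf : ContDiff ℝ 1 f)
    (hmono : StrictMono (deriv f)) {a b : ℝ} (ha : 0 < a) (hb : 0 < b) :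
    ContDiffAt ℝ 1 (fun p : ℝ × ℝ ↦ mu f Vt p.1 p.2) (a, b) :=
  contDiffAt_envelope (contDiff_perimeterGap hf).contDiffAt
    (hVt.eventually_continuousAt hf.continuous_deriv_one hmono ha hb)
    (hVt.eventually_isMaxOn hf.differentiable_one hmono.monotone ha hb)

theorem hasDerivAt_mu_left (hVt : IsEquilibrium f Vt) (hf : ContDiff ℝ 1 f)
    (hmono : StrictMono (deriv f)) {a b : ℝ} (ha : 0 < a) (hb : 0 < b) :
    HasDerivAt (fun x ↦ mu f Vt x b)
      (deriv f (a / 2) + deriv f ((a + b) / 2) + deriv f (Vt a b)) a := by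
  have hfrozen := hasDerivAt_perimeterGap_left hf.differentiable_one a b (Vt a b)
  have hmu := hasDerivAt_envelope_comp (v := fun p : ℝ × ℝ ↦ Vt p.1 p.2) (γ := fun x ↦ (x, b))
    (by fun_prop) (contDiff_perimeterGap hf).contDiffAt
    (hVt.continuousAt hf.continuous_deriv_one hmono ha hb)
    (hVt.eventually_isMaxOn hf.differentiable_one hmono.monotone ha hb) hfrozen
  exact hmu.congr_deriv (by linarith [hVt a b ha hb])

theorem hasDerivAt_mu_right (hVt : IsEquilibrium f Vt) (hf : ContDiff ℝ 1 f)
    (hmono : StrictMono (deriv f)) {a b : ℝ} (ha : 0 < a) (hb : 0 < b) :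
    HasDerivAt (mu f Vt a) (deriv f ((a + b) / 2) - deriv f (Vt a b + a + b)) b :=
  hasDerivAt_envelope_comp (v := fun p : ℝ × ℝ ↦ Vt p.1 p.2) (γ := fun x ↦ (a, x))
    (by fun_prop) (contDiff_perimeterGap hf).contDiffAt
    (hVt.continuousAt hf.continuous_deriv_one hmono ha hb)
    (hVt.eventually_isMaxOn hf.differentiable_one hmono.monotone ha hb)
    (hasDerivAt_perimeterGap_right hf.differentiable_one a b (Vt a b))

theorem half_add_lt (hVt : IsEquilibrium f Vt) (hmono : StrictMono (deriv f))
    (hodd : Function.Odd (deriv f)) {a b : ℝ} (ha : 0 < a) (hab : a < b) :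
    (a + b) / 2 < Vt a b + a + b := by
  linarith [neg_half_add_lt_of_odd hmono hodd hab (hVt a b ha (ha.trans hab))]

theorem strictAntiOn_mu (hVt : IsEquilibrium f Vt) (hf : ContDiff ℝ 1 f)
    (hmono : StrictMono (deriv f)) (hodd : Function.Odd (deriv f)) {a : ℝ} (ha : 0 < a) :
    StrictAntiOn (mu f Vt a) (Ioi a) := by
  have hderiv : ∀ b ∈ Ioi a, HasDerivAt (mu f Vt a) _ b := fun b hb ↦
    hVt.hasDerivAt_mu_right hf hmono ha (ha.trans hb)
  refine strictAntiOn_of_deriv_neg (convex_Ioi a) (HasDerivAt.continuousOn hderiv) fun b hb ↦ ?_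
  rw [interior_Ioi] at hb
  rw [(hderiv b hb).deriv]
  exact sub_neg.2 (hmono (hVt.half_add_lt hmono hodd ha hb))

theorem strictMonoOn_mu (hVt : IsEquilibrium f Vt) (hf : ContDiff ℝ 1 f)
    (hmono : StrictMono (deriv f)) (hodd : Function.Odd (deriv f)) {b : ℝ} (hb : 0 < b) :
    StrictMonoOn (fun a ↦ mu f Vt a b) (Ioo 0 b) := by
  have hderiv : ∀ a ∈ Ioo 0 b, HasDerivAt (fun x ↦ mu f Vt x b) _ a := fun a ha ↦
    hVt.hasDerivAt_mu_left hf hmono ha.1 hb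
  refine strictMonoOn_of_deriv_pos (convex_Ioo 0 b) (HasDerivAt.continuousOn hderiv) fun a ha ↦ ?_
  rw [interior_Ioo] at ha
  rw [(hderiv a ha).deriv]
  have hleft : -deriv f ((a + b) / 2) < deriv f (Vt a b) := hodd _ ▸
    hmono (neg_half_add_lt_of_odd hmono hodd ha.2 (hVt a b ha.1 hb))
  have hhalf : 0 < deriv f (a / 2) := hodd.map_zero ▸ hmono (half_pos ha.1)
  linarith

theorem exists_pos_forall_mu_pos (hVt : IsEquilibrium f Vt) (hf : Differentiable ℝ f)
    (hmono : Monotone (deriv f)) (hf₀ : 0 < f 0) :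
    ∃ δ > 0, ∀ a ∈ Ioo 0 δ, ∀ b ∈ Ioo 0 δ, 0 < mu f Vt a b := by
  have hcont : Continuous fun p : ℝ × ℝ ↦ perimeterGap f (p, 0) := by
    have := hf.continuous
    unfold perimeterGap
    fun_prop
  have h₀ : 0 < perimeterGap f ((0, 0), 0) := by
    simp only [perimeterGap, add_zero, zero_div]
    linarith
  obtain ⟨δ, hδ, hpos⟩ := Metric.eventually_nhds_iff_ball.1
    (hcont.continuousAt.eventually (lt_mem_nhds h₀))
  refine ⟨δ, hδ, fun a ha b hb ↦ ?_⟩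
  have hmem : (a, b) ∈ Metric.ball ((0, 0) : ℝ × ℝ) δ := by
    simp [Prod.dist_eq, abs_of_pos ha.1, abs_of_pos hb.1, ha.2, hb.2]
  exact (hpos _ hmem).trans_le
    (isMaxOn_perimeterGap hf hmono (hVt a b ha.1 hb.1) (mem_univ 0))

end IsEquilibrium

end Perimeter

section Tie

variable {f : ℝ → ℝ} {Vt : ℝ → ℝ → ℝ} {lam : ℝ → ℝ}

/-- `lam` is a tie function `λ`: on `(0, V₀)` it selects a point beyond the diagonal at which `mu`
vanishes; its values elsewhere are arbitrary. -/
def IsTieFunction (f : ℝ → ℝ) (Vt : ℝ → ℝ → ℝ) (lam : ℝ → ℝ) : Prop :=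
  ∀ V₁ ∈ tieDomain f Vt, V₁ < lam V₁ ∧ mu f Vt V₁ (lam V₁) = 0

theorem tieDomain_eq_biUnion : tieDomain f Vt = ⋃ W ∈ blowupSet f Vt, Ioo 0 W := by
  ext x
  simp only [tieDomain, mem_iUnion, mem_Ioo, exists_prop]
  exact ⟨fun ⟨hx, W, hW, hxW⟩ ↦ ⟨W, hW, hx, hxW⟩, fun ⟨W, hW, hx, hxW⟩ ↦ ⟨hx, W, hW, hxW⟩⟩

theorem isOpen_tieDomain : IsOpen (tieDomain f Vt) :=
  tieDomain_eq_biUnion ▸ isOpen_biUnion fun _ _ ↦ isOpen_Ioo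

theorem Ioo_subset_tieDomain {W : ℝ} (hW : W ∈ blowupSet f Vt) : Ioo 0 W ⊆ tieDomain f Vt :=
  fun _ hx ↦ ⟨hx.1, W, hW, hx.2⟩

namespace IsTieFunction

theorem strictMonoOn (hlam : IsTieFunction f Vt lam) (hVt : IsEquilibrium f Vt)
    (hf : ContDiff ℝ 1 f) (hmono : StrictMono (deriv f)) (hodd : Function.Odd (deriv f)) :
    StrictMonoOn lam (tieDomain f Vt) :=
  strictMonoOn_of_level_eq (fun _ ↦ hVt.strictMonoOn_mu hf hmono hodd)
    (fun _ ↦ hVt.strictAntiOn_mu hf hmono hodd) (fun _ hx ↦ hx.1) hlam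

theorem eventually_eq_of_mu_eq (hlam : IsTieFunction f Vt lam) (hVt : IsEquilibrium f Vt)
    (hf : ContDiff ℝ 1 f) (hmono : StrictMono (deriv f)) (hodd : Function.Odd (deriv f)) {a : ℝ}
    (ha : a ∈ tieDomain f Vt) :
    ∀ᶠ p : ℝ × ℝ in 𝓝 (a, lam a), mu f Vt p.1 p.2 = mu f Vt a (lam a) → lam p.1 = p.2 := by
  have hdomain : ∀ᶠ p : ℝ × ℝ in 𝓝 (a, lam a), p.1 ∈ tieDomain f Vt :=
    continuousAt_fst.eventually (isOpen_tieDomain.mem_nhds ha)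
  have hdiagonal : ∀ᶠ p : ℝ × ℝ in 𝓝 (a, lam a), p.1 < p.2 :=
    continuousAt_fst.eventually_lt continuousAt_snd (hlam a ha).1
  filter_upwards [hdomain, hdiagonal] with p hp hlt hmu
  obtain ⟨hlt_lam, hmu_lam⟩ := hlam p.1 hp
  refine (hVt.strictAntiOn_mu hf hmono hodd hp.1).injOn hlt_lam hlt ?_
  rw [hmu_lam, hmu, (hlam a ha).2]

theorem contDiffOn (hlam : IsTieFunction f Vt lam) (hVt : IsEquilibrium f Vt)
    (hf : ContDiff ℝ 1 f) (hmono : StrictMono (deriv f)) (hodd : Function.Odd (deriv f)) :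
    ContDiffOn ℝ 1 lam (tieDomain f Vt) := by
  intro a ha
  obtain ⟨hlt, -⟩ := hlam a ha
  have hpos : 0 < lam a := ha.1.trans hlt
  exact (contDiffAt_of_levelSet_subset_graph one_ne_zero (hVt.contDiffAt_mu hf hmono ha.1 hpos)
    (hVt.hasDerivAt_mu_right hf hmono ha.1 hpos)
    (sub_neg.2 (hmono (hVt.half_add_lt hmono hodd ha.1 hlt))).ne
    (hlam.eventually_eq_of_mu_eq hVt hf hmono hodd ha)).contDiffWithinAt

theorem exists_pos_forall_le (hlam : IsTieFunction f Vt lam) (hVt : IsEquilibrium f Vt)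
    (hf : Differentiable ℝ f) (hmono : Monotone (deriv f)) (hf₀ : 0 < f 0) :
    ∃ δ > 0, ∀ a ∈ tieDomain f Vt, δ ≤ lam a := by
  obtain ⟨δ, hδ, hpos⟩ := hVt.exists_pos_forall_mu_pos hf hmono hf₀
  refine ⟨δ, hδ, fun a ha ↦ ?_⟩
  obtain ⟨hlt, hmu⟩ := hlam a ha
  by_contra! hltδ
  exact (hpos a ⟨ha.1, hlt.trans hltδ⟩ (lam a) ⟨ha.1.trans hlt, hltδ⟩).ne' hmu

theorem exists_tendsto_nhdsGT_zero (hlam : IsTieFunction f Vt lam) (hVt : IsEquilibrium f Vt)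
    (hf : ContDiff ℝ 1 f) (hmono : StrictMono (deriv f)) (hodd : Function.Odd (deriv f))
    (hf₀ : 0 < f 0) (hblowup : (blowupSet f Vt).Nonempty) :
    ∃ c > 0, Tendsto lam (𝓝[>] 0) (𝓝 c) := by
  obtain ⟨W, hW⟩ := hblowup
  have hsub := Ioo_subset_tieDomain hW
  have hne : (Ioo 0 W).Nonempty := nonempty_Ioo.2 hW.1
  obtain ⟨δ, hδ, hle⟩ := hlam.exists_pos_forall_le hVt hf.differentiable_one hmono.monotone hf₀
  have hlower : δ ∈ lowerBounds (lam '' Ioo 0 W) := forall_mem_image.2 fun a ha ↦ hle a (hsub ha)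
  exact ⟨sInf (lam '' Ioo 0 W), hδ.trans_le (le_csInf (hne.image _) hlower),
    ((hlam.strictMonoOn hVt hf hmono hodd).monotoneOn.mono hsub).tendsto_nhdsWithin_Ioo_right hne
      ⟨δ, hlower⟩⟩

end IsTieFunction

end Tie

/-- Assume V₀ > 0, and let λ : (0, V₀) → ℝ be the tie function
assigning to each V₁ ∈ (0, V₀) the unique λ(V₁) > V₁ with μ(V₁, λ(V₁)) = 0. Then λ
is strictly increasing, continuously differentiable, and tends to a finite positive
limit as V₁ → 0⁺. -/
theorem stmt_13 (f : ℝ → ℝ)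
    (hf_even : ∀ x, f (-x) = f x)
    (hf_conv : StrictConvexOn ℝ Set.univ f)
    (hf_smooth : ContDiff ℝ 1 f)
    (hf_pos : ∀ x, 0 < f x)
    (Vt : ℝ → ℝ → ℝ)
    (hVt : ∀ V₁ V₂ : ℝ, 0 < V₁ → 0 < V₂ →
      deriv f (Vt V₁ V₂) + deriv f (Vt V₁ V₂ + V₁) + deriv f (Vt V₁ V₂ + V₁ + V₂) = 0)
    (hV₀pos : (blowupSet f Vt).Nonempty)
    (lam : ℝ → ℝ)
    (hlam : ∀ V₁ ∈ tieDomain f Vt, V₁ < lam V₁ ∧ mu f Vt V₁ (lam V₁) = 0) :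
    StrictMonoOn lam (tieDomain f Vt) ∧
    ContDiffOn ℝ 1 lam (tieDomain f Vt) ∧
    ∃ c : ℝ, 0 < c ∧ Tendsto lam (nhdsWithin 0 (Set.Ioi 0)) (nhds c) := by
  have hmono : StrictMono (deriv f) := strictMonoOn_univ.1
    (hf_conv.strictMonoOn_deriv fun _ _ ↦ hf_smooth.differentiable_one.differentiableAt)
  have hodd : Function.Odd (deriv f) := deriv_odd_of_even hf_even
  have hV : IsEquilibrium f Vt := hVt
  have htie : IsTieFunction f Vt lam := hlam
  exact ⟨htie.strictMonoOn hV hf_smooth hmono hodd, htie.contDiffOn hV hf_smooth hmono hodd,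
    htie.exists_tendsto_nhdsGT_zero hV hf_smooth hmono hodd (hf_pos 0) hV₀pos⟩
end
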